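/- Let n be a natural number, b : {1,…,n} → ℂ, γ : {1,…,n} → ℝ, and Y ∈ ℝ. Then ∫_{−∞}^{∞} |Σ_{j=1}^{n} b_j e^{iγ_j Y} / (1 + (t − γ_j)²)|² dt = (π/2) · ∫_{−∞}^{∞} |Σ_{j=1}^{n} b_j e^{iγ_j (Y+y)}|² e^{−2|y|} dy. -/

import Mathlib

open Real MeasureTheory Complex

lemma pcs_exp_eqOn_Iic (d : ℝ) : Set.EqOn
    (fun y : ℝ => Complex.exp ((2 + d * Complex.I) * (y : ℂ)))
    (fun y : ℝ => Complex.exp (Complex.I * d * y) * ((Real.exp (-(2 * |y|)) : ℝ) : ℂ))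
    (Set.Iic 0) := by
  intro y hy
  have hy' : y ≤ 0 := hy
  simp only [abs_of_nonpos hy']
  push_cast
  rw [← Complex.exp_add]
  congr 1
  ring

lemma pcs_exp_eqOn_Ioi (d : ℝ) : Set.EqOn
    (fun y : ℝ => Complex.exp ((-2 + d * Complex.I) * (y : ℂ)))
    (fun y : ℝ => Complex.exp (Complex.I * d * y) * ((Real.exp (-(2 * |y|)) : ℝ) : ℂ))
    (Set.Ioi 0) := by
  intro y hy
  have hy' : 0 < y := hy
  simp only [abs_of_pos hy']
  push_cast
  rw [← Complex.exp_add]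
  congr 1
  ring

lemma pcs_exp_intOn_Iic (d : ℝ) : IntegrableOn
    (fun y : ℝ => Complex.exp (Complex.I * d * y) * ((Real.exp (-(2 * |y|)) : ℝ) : ℂ))
    (Set.Iic 0) :=
  (integrableOn_exp_mul_complex_Iic (a := 2 + d * Complex.I) (by simp) 0).congr_fun
    (pcs_exp_eqOn_Iic d) measurableSet_Iic

lemma pcs_exp_intOn_Ioi (d : ℝ) : IntegrableOn
    (fun y : ℝ => Complex.exp (Complex.I * d * y) * ((Real.exp (-(2 * |y|)) : ℝ) : ℂ))
    (Set.Ioi 0) :=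
  (integrableOn_exp_mul_complex_Ioi (a := -2 + d * Complex.I) (by simp) 0).congr_fun
    (pcs_exp_eqOn_Ioi d) measurableSet_Ioi

lemma pcs_exp_int (d : ℝ) : Integrable
    (fun y : ℝ => Complex.exp (Complex.I * d * y) * ((Real.exp (-(2 * |y|)) : ℝ) : ℂ)) := by
  rw [← integrableOn_univ, ← Set.Iic_union_Ioi (a := (0 : ℝ))]
  exact (pcs_exp_intOn_Iic d).union (pcs_exp_intOn_Ioi d)

lemma pcs_exp_val (d : ℝ) :
    ∫ y : ℝ, Complex.exp (Complex.I * d * y) * ((Real.exp (-(2 * |y|)) : ℝ) : ℂ)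
      = ((4 / (4 + d ^ 2) : ℝ) : ℂ) := by
  rw [← intervalIntegral.integral_Iic_add_Ioi (pcs_exp_intOn_Iic d) (pcs_exp_intOn_Ioi d),
    ← setIntegral_congr_fun measurableSet_Iic (pcs_exp_eqOn_Iic d),
    ← setIntegral_congr_fun measurableSet_Ioi (pcs_exp_eqOn_Ioi d),
    integral_exp_mul_complex_Iic (by simp), integral_exp_mul_complex_Ioi (by simp)]
  have h1 : (2 + d * Complex.I : ℂ) ≠ 0 := fun h => by simpa using congrArg Complex.re h
  have h2 : (-2 + d * Complex.I : ℂ) ≠ 0 := fun h => by simpa using congrArg Complex.re h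
  have h3 : (4 + d ^ 2 : ℂ) ≠ 0 := by
    have : (4 + d ^ 2 : ℝ) ≠ 0 := by positivity
    exact_mod_cast this
  push_cast
  simp only [mul_zero, Complex.exp_zero]
  field_simp
  ring_nf
  simp only [Complex.I_sq]
  ring

lemma pcs_cauchy_int (a c : ℝ) :
    Integrable (fun t : ℝ => (1 + (t - a) ^ 2)⁻¹ * (1 + (t - c) ^ 2)⁻¹) := by
  refine (integrable_inv_one_add_sq.comp_sub_right a).mono' (by fun_prop) (.of_forall fun t => ?_)
  have h2 : (1 + (t - c) ^ 2)⁻¹ ≤ 1 := inv_le_one_of_one_le₀ (by nlinarith [sq_nonneg (t - c)])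
  have h1 : 0 ≤ (1 + (t - a) ^ 2)⁻¹ := by positivity
  rw [Real.norm_of_nonneg (by positivity)]
  exact mul_le_of_le_one_right h1 h2

lemma pcs_lim1 : Filter.Tendsto (fun t : ℝ => t / (1 + t ^ 2)) (Bornology.cobounded ℝ)
    (nhds 0) := by
  have h0 : Filter.Tendsto (fun t : ℝ => |t|⁻¹) (Bornology.cobounded ℝ) (nhds 0) := by
    simpa using (Filter.tendsto_inv₀_cobounded (α := ℝ)).abs
  refine squeeze_zero_norm (fun t => ?_) h0
  rw [norm_div, Real.norm_of_nonneg (by positivity : 0 ≤ 1 + t ^ 2), Real.norm_eq_abs]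
  rcases eq_or_ne t 0 with rfl | ht
  · simp
  · have : 0 < |t| := abs_pos.2 ht
    rw [div_le_iff₀ (by positivity), inv_mul_eq_div, le_div_iff₀ this]
    nlinarith [abs_mul_abs_self t]

lemma pcs_lim2 : Filter.Tendsto (fun t : ℝ => 1 / (1 + t ^ 2)) (Bornology.cobounded ℝ)
    (nhds 0) := by
  have h := pcs_lim1.mul (Filter.tendsto_inv₀_cobounded (α := ℝ))
  rw [mul_zero] at h
  refine h.congr' ?_
  filter_upwards [Bornology.eventually_ne_cobounded (0 : ℝ)] with t ht
  field_simp

lemma pcs_loglim (d : ℝ) : Filter.Tendsto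
    (fun t : ℝ => Real.log (1 + t ^ 2) - Real.log (1 + (t + d) ^ 2)) (Bornology.cobounded ℝ)
    (nhds 0) := by
  have h : Filter.Tendsto
      (fun t : ℝ => 1 + 2 * d * (t / (1 + t ^ 2)) + d ^ 2 * (1 / (1 + t ^ 2)))
      (Bornology.cobounded ℝ) (nhds 1) := by
    simpa using ((pcs_lim1.const_mul (2 * d)).const_add 1).add (pcs_lim2.const_mul (d ^ 2))
  have h' := (h.log one_ne_zero).neg
  simp only [Real.log_one, neg_zero] at h'
  refine h'.congr fun t => ?_
  have e : 1 + 2 * d * (t / (1 + t ^ 2)) + d ^ 2 * (1 / (1 + t ^ 2))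
      = (1 + (t + d) ^ 2) / (1 + t ^ 2) := by
    field_simp
    ring
  rw [e, Real.log_div (by positivity) (by positivity)]
  ring

lemma pcs_cauchy_val0 (d : ℝ) :
    ∫ t : ℝ, (1 + t ^ 2)⁻¹ * (1 + (t + d) ^ 2)⁻¹ = 2 * π / (4 + d ^ 2) := by
  have hint : Integrable (fun t : ℝ => (1 + t ^ 2)⁻¹ * (1 + (t + d) ^ 2)⁻¹) := by
    simpa using pcs_cauchy_int 0 (-d)
  have hb : (Filter.atBot : Filter ℝ) ≤ Bornology.cobounded ℝ := by
    rw [← Metric.cobounded_eq_cocompact.symm]; exact atBot_le_cocompact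
  have ht : (Filter.atTop : Filter ℝ) ≤ Bornology.cobounded ℝ := by
    rw [← Metric.cobounded_eq_cocompact.symm]; exact atTop_le_cocompact
  have ab := tendsto_nhds_of_tendsto_nhdsWithin Real.tendsto_arctan_atBot
  have at' := tendsto_nhds_of_tendsto_nhdsWithin Real.tendsto_arctan_atTop
  rcases eq_or_ne d 0 with rfl | hd
  · rw [integral_of_hasDerivAt_of_tendsto
      (f := fun t => (1 / 2) * (t / (1 + t ^ 2)) + (1 / 2) * Real.arctan t) (fun t => ?_) hint
      (((pcs_lim1.mono_left hb).const_mul _).add (ab.const_mul _))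
      (((pcs_lim1.mono_left ht).const_mul _).add (at'.const_mul _))]
    · ring
    · have hne : 1 + t ^ 2 ≠ 0 := by positivity
      have h1 : HasDerivAt (fun t : ℝ => 1 + t ^ 2) (2 * t) t := by
        simpa using (hasDerivAt_pow 2 t).const_add 1
      refine HasDerivAt.congr_deriv (((((hasDerivAt_id t).div h1 hne).const_mul (1 / 2))).add
        ((Real.hasDerivAt_arctan t).const_mul (1 / 2))) ?_
      simp only [id, add_zero]
      field_simp
      ring
  · rw [integral_of_hasDerivAt_of_tendsto
      (f := fun t => (-1 / (d * (4 + d ^ 2))) *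
          (Real.log (1 + t ^ 2) - Real.log (1 + (t + d) ^ 2))
        + (1 / (4 + d ^ 2)) * (Real.arctan t + Real.arctan (t + d))) (fun t => ?_) hint
      ((((pcs_loglim d).mono_left hb).const_mul _).add ((ab.add
        (ab.comp (Filter.tendsto_atBot_add_const_right _ d Filter.tendsto_id))).const_mul _))
      ((((pcs_loglim d).mono_left ht).const_mul _).add ((at'.add
        (at'.comp (Filter.tendsto_atTop_add_const_right _ d Filter.tendsto_id))).const_mul _))]
    · ring
    · have hne : 1 + t ^ 2 ≠ 0 := by positivity
      have hne2 : 1 + (t + d) ^ 2 ≠ 0 := by positivity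
      have hne3 : 4 + d ^ 2 ≠ 0 := by positivity
      have h1 : HasDerivAt (fun t : ℝ => 1 + t ^ 2) (2 * t) t := by
        simpa using (hasDerivAt_pow 2 t).const_add 1
      have h0 : HasDerivAt (fun t : ℝ => t + d) 1 t := (hasDerivAt_id t).add_const d
      have h2 : HasDerivAt (fun t : ℝ => 1 + (t + d) ^ 2) (2 * (t + d)) t := by
        simpa using (h0.pow 2).const_add 1
      refine HasDerivAt.congr_deriv ((((h1.log hne).sub (h2.log hne2)).const_mul (-1 / (d * (4 + d ^ 2)))).add
        (((Real.hasDerivAt_arctan t).add h0.arctan).const_mul (1 / (4 + d ^ 2)))) ?_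
      field_simp
      ring

lemma pcs_cauchy_val (a c : ℝ) :
    ∫ t : ℝ, (1 + (t - a) ^ 2)⁻¹ * (1 + (t - c) ^ 2)⁻¹ = 2 * π / (4 + (a - c) ^ 2) := by
  rw [← pcs_cauchy_val0 (a - c),
    ← integral_sub_right_eq_self (fun t : ℝ => (1 + t ^ 2)⁻¹ * (1 + (t + (a - c)) ^ 2)⁻¹) a]
  simp

lemma pcs_normsq {n : ℕ} (z : Fin n → ℂ) :
    (((norm (∑ j, z j)) ^ 2 : ℝ) : ℂ) = ∑ j, ∑ k, z j * (starRingEnd ℂ) (z k) := by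
  push_cast
  rw [← Complex.mul_conj', map_sum, Finset.sum_mul_sum]

/-- **Plancherel-type identity.** For `b : Fin n → ℂ`, `γ : Fin n → ℝ` and `Y ∈ ℝ`,
`∫ |∑ⱼ bⱼ e^{iγⱼY}/(1+(t-γⱼ)²)|² dt = (π/2) ∫ |∑ⱼ bⱼ e^{iγⱼ(Y+y)}|² e^{-2|y|} dy`. -/
theorem plancherel_cauchy_sum (n : ℕ) (b : Fin n → ℂ) (γ : Fin n → ℝ) (Y : ℝ) :
    (∫ t : ℝ, (norm (E := ℂ) (∑ j : Fin n,
        b j * Complex.exp (Complex.I * (γ j : ℂ) * (Y : ℂ)) /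
          (((1 + (t - γ j) ^ 2 : ℝ)) : ℂ))) ^ 2)
      = π / 2 * ∫ y : ℝ, (norm (E := ℂ) (∑ j : Fin n,
          b j * Complex.exp (Complex.I * (γ j : ℂ) * ((Y + y : ℝ) : ℂ)))) ^ 2 *
            Real.exp (-(2 * |y|)) := by
  apply Complex.ofReal_injective
  rw [Complex.ofReal_mul, ← integral_complex_ofReal, ← integral_complex_ofReal]
  set c : Fin n → ℂ := fun j => b j * Complex.exp (Complex.I * (γ j : ℂ) * (Y : ℂ)) with hc
  have hL : ∀ t : ℝ, (((norm (E := ℂ) (∑ j : Fin n,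
        b j * Complex.exp (Complex.I * (γ j : ℂ) * (Y : ℂ)) /
          (((1 + (t - γ j) ^ 2 : ℝ)) : ℂ))) ^ 2 : ℝ) : ℂ)
      = ∑ j, ∑ k, (c j * (starRingEnd ℂ) (c k)) *
          (((1 + (t - γ j) ^ 2)⁻¹ * (1 + (t - γ k) ^ 2)⁻¹ : ℝ) : ℂ) := by
    intro t
    rw [pcs_normsq]
    refine Finset.sum_congr rfl fun j _ => Finset.sum_congr rfl fun k _ => ?_
    rw [map_div₀, Complex.conj_ofReal, Complex.ofReal_mul, Complex.ofReal_inv, Complex.ofReal_inv]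
    simp only [hc, div_eq_mul_inv]
    ring
  have hR : ∀ y : ℝ, (((norm (E := ℂ) (∑ j : Fin n,
          b j * Complex.exp (Complex.I * (γ j : ℂ) * ((Y + y : ℝ) : ℂ)))) ^ 2 *
            Real.exp (-(2 * |y|)) : ℝ) : ℂ)
      = ∑ j, ∑ k, (c j * (starRingEnd ℂ) (c k)) *
          (Complex.exp (Complex.I * ((γ j - γ k : ℝ) : ℂ) * y) *
            ((Real.exp (-(2 * |y|)) : ℝ) : ℂ)) := by
    intro y
    rw [Complex.ofReal_mul, pcs_normsq, Finset.sum_mul]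
    refine Finset.sum_congr rfl fun j _ => ?_
    rw [Finset.sum_mul]
    refine Finset.sum_congr rfl fun k _ => ?_
    have e1 : Complex.exp (Complex.I * (γ j : ℂ) * ((Y + y : ℝ) : ℂ))
        = Complex.exp (Complex.I * γ j * Y) * Complex.exp (Complex.I * γ j * y) := by
      rw [← Complex.exp_add]; push_cast; ring_nf
    have e2 : (starRingEnd ℂ) (Complex.exp (Complex.I * (γ k : ℂ) * ((Y + y : ℝ) : ℂ)))
        = (starRingEnd ℂ) (Complex.exp (Complex.I * γ k * Y)) *
          Complex.exp (-(Complex.I * γ k * y)) := by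
      rw [← Complex.exp_conj, ← Complex.exp_conj, ← Complex.exp_add]
      simp only [map_mul, Complex.conj_I, Complex.conj_ofReal]
      push_cast; ring_nf
    have e3 : Complex.exp (Complex.I * ((γ j - γ k : ℝ) : ℂ) * y)
        = Complex.exp (Complex.I * γ j * y) * Complex.exp (-(Complex.I * γ k * y)) := by
      rw [← Complex.exp_add]; push_cast; ring_nf
    rw [map_mul, e1, e2, e3]
    simp only [hc, map_mul]
    ring
  have iL : ∀ j k, Integrable (fun t : ℝ => (c j * (starRingEnd ℂ) (c k)) *
      (((1 + (t - γ j) ^ 2)⁻¹ * (1 + (t - γ k) ^ 2)⁻¹ : ℝ) : ℂ)) := fun j k =>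
    (pcs_cauchy_int (γ j) (γ k)).ofReal.const_mul _
  have iR : ∀ j k, Integrable (fun y : ℝ => (c j * (starRingEnd ℂ) (c k)) *
      (Complex.exp (Complex.I * ((γ j - γ k : ℝ) : ℂ) * y) *
            ((Real.exp (-(2 * |y|)) : ℝ) : ℂ))) := fun j k =>
    (pcs_exp_int (γ j - γ k)).const_mul _
  simp_rw [hL, hR]
  rw [integral_finsetSum _ fun j _ => integrable_finsetSum _ fun k _ => iL j k,
    integral_finsetSum _ fun j _ => integrable_finsetSum _ fun k _ => iR j k, Finset.mul_sum]
  refine Finset.sum_congr rfl fun j _ => ?_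
  rw [integral_finsetSum _ fun k _ => iL j k, integral_finsetSum _ fun k _ => iR j k,
    Finset.mul_sum]
  refine Finset.sum_congr rfl fun k _ => ?_
  rw [integral_const_mul, integral_const_mul, pcs_exp_val, integral_complex_ofReal,
    pcs_cauchy_val, mul_left_comm, ← Complex.ofReal_mul]
  congr 2
  ring
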